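/- Lemma 4, part (i): Let N, K, F be positive integers, M ≥ 0 a real, W_1,…,W_N i.i.d. uniform on {1,…,2^F}, V_k = g_k(W_1,…,W_N) for k ∈ {1,…,K} where each g_k maps into a set of size at most ⌊2^{F·M}⌋, and let D = (D_1,…,D_K) be uniformly distributed on {1,…,N}^K, independent of (W_1,…,W_N). Fix ℓ ∈ {1,…,K} and for k ∈ {1,…,ℓ} define β_k := (1/F)·I(W_{D_k}; V_1,…,V_k | W_{D_1},…,W_{D_{k−1}}, D). Then for every k ∈ {1,…,ℓ}: β_k ≤ k·M/N. -/

import Mathlib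

/-- Probability that the discrete random variable `X` (on finite space `Ω` with
probability mass function `p`) takes the value `x`. -/
noncomputable def pr {Ω : Type*} [Fintype Ω] {α : Type*} [DecidableEq α]
    (p : Ω → ℝ) (X : Ω → α) (x : α) : ℝ :=
  ∑ ω ∈ Finset.univ.filter (fun ω => X ω = x), p ω

/-- Shannon entropy (base 2) of the discrete random variable `X`. -/
noncomputable def ent {Ω : Type*} [Fintype Ω] {α : Type*} [DecidableEq α]
    (p : Ω → ℝ) (X : Ω → α) : ℝ :=
  -∑ x ∈ Finset.univ.image X, pr p X x * Real.logb 2 (pr p X x)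

/-- Conditional mutual information `I(X;Y|Z) = H(X,Z) + H(Y,Z) − H(X,Y,Z) − H(Z)`
(base 2). -/
noncomputable def cmi {Ω : Type*} [Fintype Ω] {α β γ : Type*}
    [DecidableEq α] [DecidableEq β] [DecidableEq γ]
    (p : Ω → ℝ) (X : Ω → α) (Y : Ω → β) (Z : Ω → γ) : ℝ :=
  ent p (fun ω => (X ω, Z ω)) + ent p (fun ω => (Y ω, Z ω))
    - ent p (fun ω => (X ω, Y ω, Z ω)) - ent p Z

/-!
Fix the demands `d` and let `S` be the set of messages requested by the receivers before `k`.
Conditioned on the known messages `W_S`, the messages are still independent, so the information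
that the caches `G = (V_1, …, V_k)` carry about the individual messages is superadditive:
`∑ n, I(W_n; G | W_S) ≤ I(W_1, …, W_N; G | W_S) ≤ log |G| ≤ k F M`.
Since `S` does not depend on the demand `d k`, which is uniform given the other demands, averaging
over `d` replaces `I(W_{d k}; G | W_S)` by `1 / N` times the sum on the left.
-/

section Marginals

variable {Ω α β γ : Type*} [Fintype Ω] [DecidableEq α] [DecidableEq β] [DecidableEq γ]
  {p : Ω → ℝ}

theorem pr_nonneg (hp : ∀ ω, 0 ≤ p ω) (X : Ω → α) (x : α) : 0 ≤ pr p X x :=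
  Finset.sum_nonneg fun ω _ => hp ω

theorem pr_apply_pos (hp : ∀ ω, 0 ≤ p ω) (X : Ω → α) {ω : Ω} (hω : 0 < p ω) :
    0 < pr p X (X ω) :=
  hω.trans_le <| Finset.single_le_sum (fun a _ => hp a) (by simp)

theorem sum_image_pr_mul (p : Ω → ℝ) (X : Ω → α) (f : α → ℝ) :
    ∑ x ∈ Finset.univ.image X, pr p X x * f x = ∑ ω, p ω * f (X ω) := by
  rw [← Finset.sum_fiberwise_of_maps_to fun ω _ =>
    Finset.mem_image_of_mem X (Finset.mem_univ ω)]
  refine Finset.sum_congr rfl fun x _ => ?_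
  rw [pr, Finset.sum_mul]
  exact Finset.sum_congr rfl fun ω hω => by rw [(Finset.mem_filter.1 hω).2]

theorem sum_image_pr (p : Ω → ℝ) (X : Ω → α) :
    ∑ x ∈ Finset.univ.image X, pr p X x = ∑ ω, p ω := by
  simpa using sum_image_pr_mul p X 1

theorem sum_image_pr_prodMk (p : Ω → ℝ) (X : Ω → α) (Z : Ω → γ) (z : γ) :
    ∑ x ∈ Finset.univ.image X, pr p (fun ω => (X ω, Z ω)) (x, z) = pr p Z z := by
  rw [pr, ← Finset.sum_fiberwise_of_maps_to fun ω _ =>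
    Finset.mem_image_of_mem X (Finset.mem_univ ω)]
  simp only [pr, Prod.mk.injEq, Finset.filter_filter, and_comm]

theorem pr_apply_congr (p : Ω → ℝ) {X : Ω → α} {Y : Ω → β}
    (h : ∀ a b, X a = X b ↔ Y a = Y b) (ω : Ω) : pr p X (X ω) = pr p Y (Y ω) := by
  simp only [pr, h]

end Marginals

section Entropy

variable {Ω α β γ α' β' γ' : Type*} [Fintype Ω] [DecidableEq α] [DecidableEq β] [DecidableEq γ]
  [DecidableEq α'] [DecidableEq β'] [DecidableEq γ'] {p : Ω → ℝ}

theorem ent_eq_neg_sum (p : Ω → ℝ) (X : Ω → α) :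
    ent p X = -∑ ω, p ω * Real.logb 2 (pr p X (X ω)) := by
  rw [ent, sum_image_pr_mul p X fun x => Real.logb 2 (pr p X x)]

theorem ent_congr (p : Ω → ℝ) {X : Ω → α} {Y : Ω → β} (h : ∀ a b, X a = X b ↔ Y a = Y b) :
    ent p X = ent p Y := by
  simp only [ent_eq_neg_sum, pr_apply_congr p h]

theorem cmi_congr (p : Ω → ℝ) {X : Ω → α} {X' : Ω → α'} {Y : Ω → β} {Y' : Ω → β'}
    {Z : Ω → γ} {Z' : Ω → γ'} (hX : ∀ a b, X a = X b ↔ X' a = X' b)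
    (hY : ∀ a b, Y a = Y b ↔ Y' a = Y' b) (hZ : ∀ a b, Z a = Z b ↔ Z' a = Z' b) :
    cmi p X Y Z = cmi p X' Y' Z' := by
  unfold cmi
  congr 1
  · congr 1
    · congr 1 <;> exact ent_congr p fun a b => by simp only [Prod.mk.injEq, hX, hY, hZ]
    · exact ent_congr p fun a b => by simp only [Prod.mk.injEq, hX, hY, hZ]
  · exact ent_congr p hZ

theorem ent_le_neg_sum_mul_logb (hp : ∀ ω, 0 ≤ p ω) (X : Ω → α) {f : α → ℝ} (hf : ∀ x, 0 ≤ f x)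
    (hf_pos : ∀ ω, 0 < p ω → 0 < f (X ω))
    (hf_sum : ∑ x ∈ Finset.univ.image X, f x ≤ ∑ ω, p ω) :
    ent p X ≤ -∑ ω, p ω * Real.logb 2 (f (X ω)) := by
  have hratio : ∑ ω, p ω * (f (X ω) / pr p X (X ω)) ≤ ∑ ω, p ω := by
    rw [← sum_image_pr_mul p X fun x => f x / pr p X x]
    refine (Finset.sum_le_sum fun x _ => ?_).trans hf_sum
    rw [mul_div_left_comm]
    exact mul_le_of_le_one_right (hf x) (div_self_le_one _)
  have hlog (ω : Ω) : p ω * Real.log (f (X ω)) - p ω * Real.log (pr p X (X ω)) ≤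
      p ω * (f (X ω) / pr p X (X ω)) - p ω := by
    obtain h0 | hpos := (hp ω).eq_or_lt
    · simp [← h0]
    have hX := pr_apply_pos hp X hpos
    rw [← mul_sub, ← Real.log_div (hf_pos ω hpos).ne' hX.ne', ← mul_sub_one]
    exact mul_le_mul_of_nonneg_left
      (Real.log_le_sub_one_of_pos (div_pos (hf_pos ω hpos) hX)) hpos.le
  have hsum := Finset.sum_le_sum fun ω (_ : ω ∈ Finset.univ) => hlog ω
  rw [Finset.sum_sub_distrib, Finset.sum_sub_distrib] at hsum
  rw [ent_eq_neg_sum, neg_le_neg_iff]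
  simp only [Real.logb, mul_div_assoc', ← Finset.sum_div]
  exact div_le_div_of_nonneg_right (by linarith) (Real.log_nonneg one_le_two)

theorem sum_image_condIndep_le (hp : ∀ ω, 0 ≤ p ω) (X : Ω → α) (Y : Ω → β) (Z : Ω → γ) :
    ∑ t ∈ Finset.univ.image fun ω => (X ω, Y ω, Z ω),
      pr p (fun ω => (X ω, Z ω)) (t.1, t.2.2) * pr p (fun ω => (Y ω, Z ω)) t.2 / pr p Z t.2.2 ≤
        ∑ ω, p ω := by
  calc
    _ ≤ ∑ t ∈ Finset.univ.image X ×ˢ Finset.univ.image Y ×ˢ Finset.univ.image Z,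
        pr p (fun ω => (X ω, Z ω)) (t.1, t.2.2) * pr p (fun ω => (Y ω, Z ω)) t.2 /
          pr p Z t.2.2 := by
      refine Finset.sum_le_sum_of_subset_of_nonneg ?_ fun t _ _ =>
        div_nonneg (mul_nonneg (pr_nonneg hp _ _) (pr_nonneg hp _ _)) (pr_nonneg hp _ _)
      simp [Finset.image_subset_iff]
    _ = ∑ z ∈ Finset.univ.image Z, pr p Z z * pr p Z z / pr p Z z := by
      simp only [Finset.sum_product_right, ← Finset.sum_div, ← Finset.sum_mul, ← Finset.mul_sum,
        sum_image_pr_prodMk]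
    _ = ∑ ω, p ω := by simp only [mul_self_div_self, sum_image_pr]

theorem cmi_nonneg (hp : ∀ ω, 0 ≤ p ω) (X : Ω → α) (Y : Ω → β) (Z : Ω → γ) :
    0 ≤ cmi p X Y Z := by
  have hgibbs := ent_le_neg_sum_mul_logb hp (fun ω => (X ω, Y ω, Z ω))
    (f := fun t => pr p (fun ω => (X ω, Z ω)) (t.1, t.2.2) * pr p (fun ω => (Y ω, Z ω)) t.2 /
      pr p Z t.2.2)
    (fun t => div_nonneg (mul_nonneg (pr_nonneg hp _ _) (pr_nonneg hp _ _)) (pr_nonneg hp _ _))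
    (fun ω hω => div_pos
      (mul_pos (pr_apply_pos hp (fun ω => (X ω, Z ω)) hω)
        (pr_apply_pos hp (fun ω => (Y ω, Z ω)) hω))
      (pr_apply_pos hp Z hω))
    (sum_image_condIndep_le hp X Y Z)
  have hsplit (ω : Ω) :
      p ω * Real.logb 2 (pr p (fun ω => (X ω, Z ω)) (X ω, Z ω) *
        pr p (fun ω => (Y ω, Z ω)) (Y ω, Z ω) / pr p Z (Z ω)) =
      p ω * Real.logb 2 (pr p (fun ω => (X ω, Z ω)) (X ω, Z ω)) +
        p ω * Real.logb 2 (pr p (fun ω => (Y ω, Z ω)) (Y ω, Z ω)) -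
        p ω * Real.logb 2 (pr p Z (Z ω)) := by
    obtain h0 | hpos := (hp ω).eq_or_lt
    · simp [← h0]
    have hXZ := (pr_apply_pos hp (fun ω => (X ω, Z ω)) hpos).ne'
    have hYZ := (pr_apply_pos hp (fun ω => (Y ω, Z ω)) hpos).ne'
    rw [Real.logb_div (mul_ne_zero hXZ hYZ) (pr_apply_pos hp Z hpos).ne', Real.logb_mul hXZ hYZ]
    ring
  simp only [hsplit, Finset.sum_sub_distrib, Finset.sum_add_distrib] at hgibbs
  rw [cmi, ent_eq_neg_sum p fun ω => (X ω, Z ω), ent_eq_neg_sum p fun ω => (Y ω, Z ω),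
    ent_eq_neg_sum p Z]
  linarith

theorem ent_le_ent_prodMk (hp : ∀ ω, 0 ≤ p ω) (Y : Ω → β) (Z : Ω → γ) :
    ent p Z ≤ ent p fun ω => (Y ω, Z ω) := by
  have hself := cmi_nonneg hp Y Y Z
  rw [cmi, ent_congr p (X := fun ω => (Y ω, Y ω, Z ω)) (Y := fun ω => (Y ω, Z ω)) (by simp)]
    at hself
  linarith

theorem ent_prodMk_le (hp : ∀ ω, 0 ≤ p ω) [Fintype β] (Y : Ω → β) (Z : Ω → γ) :
    (ent p fun ω => (Y ω, Z ω)) ≤ ent p Z + (∑ ω, p ω) * Real.logb 2 (Fintype.card β) := by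
  obtain _ | hΩ := isEmpty_or_nonempty Ω
  · simp [ent]
  have hβ : (0 : ℝ) < Fintype.card β := by
    have : Nonempty β := hΩ.map Y
    exact_mod_cast Fintype.card_pos
  have hsum : ∑ t ∈ Finset.univ.image fun ω => (Y ω, Z ω), pr p Z t.2 / Fintype.card β ≤
      ∑ ω, p ω := by
    calc
      _ ≤ ∑ t ∈ Finset.univ ×ˢ Finset.univ.image Z, pr p Z t.2 / Fintype.card β := by
        refine Finset.sum_le_sum_of_subset_of_nonneg ?_ fun t _ _ =>
          div_nonneg (pr_nonneg hp _ _) hβ.le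
        simp [Finset.image_subset_iff]
      _ = ∑ ω, p ω := by
        simp [Finset.sum_product_right, mul_div_cancel₀, hβ.ne', sum_image_pr]
  have hgibbs := ent_le_neg_sum_mul_logb hp (fun ω => (Y ω, Z ω))
    (f := fun t => pr p Z t.2 / Fintype.card β) (fun t => div_nonneg (pr_nonneg hp _ _) hβ.le)
    (fun ω hω => div_pos (pr_apply_pos hp Z hω) hβ) hsum
  have hsplit (ω : Ω) : p ω * Real.logb 2 (pr p Z (Z ω) / Fintype.card β) =
      p ω * Real.logb 2 (pr p Z (Z ω)) - p ω * Real.logb 2 (Fintype.card β) := by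
    obtain h0 | hpos := (hp ω).eq_or_lt
    · simp [← h0]
    rw [Real.logb_div (pr_apply_pos hp Z hpos).ne' hβ.ne', mul_sub]
  simp only [hsplit, Finset.sum_sub_distrib, ← Finset.sum_mul] at hgibbs
  rw [ent_eq_neg_sum p Z]
  linarith

theorem cmi_le_sum_mul_logb_card (hp : ∀ ω, 0 ≤ p ω) [Fintype β] (X : Ω → α) (Y : Ω → β)
    (Z : Ω → γ) : cmi p X Y Z ≤ (∑ ω, p ω) * Real.logb 2 (Fintype.card β) := by
  have hswap : (ent p fun ω => (X ω, Y ω, Z ω)) = ent p fun ω => (Y ω, X ω, Z ω) :=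
    ent_congr p fun a b => by simp only [Prod.mk.injEq, and_left_comm]
  rw [cmi, hswap]
  linarith [ent_le_ent_prodMk hp Y fun ω => (X ω, Z ω), ent_prodMk_le hp Y Z]

/-- By the chain rule, the difference of the two sides is `I(X;Y|G,Z) - I(X;Y|Z)`. -/
theorem cmi_add_cmi_le_of_cmi_eq_zero {δ : Type*} [DecidableEq δ] (hp : ∀ ω, 0 ≤ p ω)
    {X : Ω → α} {Y : Ω → β} {Z : Ω → γ} (hXY : cmi p X Y Z = 0) (G : Ω → δ) :
    cmi p X G Z + cmi p Y G Z ≤ cmi p (fun ω => (X ω, Y ω)) G Z := by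
  have hcond := cmi_nonneg hp X Y fun ω => (G ω, Z ω)
  have hXYZ : (ent p fun ω => ((X ω, Y ω), Z ω)) = ent p fun ω => (X ω, Y ω, Z ω) :=
    ent_congr p fun a b => by simp only [Prod.mk.injEq, and_assoc]
  have hXYGZ : (ent p fun ω => ((X ω, Y ω), G ω, Z ω)) = ent p fun ω => (X ω, Y ω, G ω, Z ω) :=
    ent_congr p fun a b => by simp only [Prod.mk.injEq, and_assoc]
  simp only [cmi] at hXY hcond ⊢
  linarith

theorem ent_const_mul (p : Ω → ℝ) (X : Ω → α) (c : ℝ) :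
    ent (fun ω => c * p ω) X = c * ent p X - c * Real.logb 2 c * ∑ ω, p ω := by
  have hpr (x : α) : pr (fun ω => c * p ω) X x = c * pr p X x := (Finset.mul_sum ..).symm
  have hterm (x : α) : c * pr p X x * Real.logb 2 (c * pr p X x) =
      c * (pr p X x * Real.logb 2 (pr p X x)) + c * Real.logb 2 c * pr p X x := by
    obtain rfl | hc := eq_or_ne c 0
    · simp
    obtain hx | hx := eq_or_ne (pr p X x) 0
    · simp [hx]
    rw [Real.logb_mul hc hx]
    ring
  simp only [ent, hpr, hterm, Finset.sum_add_distrib, ← Finset.mul_sum, sum_image_pr]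
  ring

theorem cmi_const_mul (p : Ω → ℝ) (X : Ω → α) (Y : Ω → β) (Z : Ω → γ) (c : ℝ) :
    cmi (fun ω => c * p ω) X Y Z = c * cmi p X Y Z := by
  simp only [cmi, ent_const_mul]
  ring

end Entropy

section Slices

variable {A B α β γ : Type*} [Fintype A] [Fintype B] [DecidableEq B] [DecidableEq α]
  [DecidableEq β] [DecidableEq γ]

/-- The slices `p (·, b)` are left unnormalised, so no term for the entropy of `b` appears. -/
theorem ent_prodMk_snd (p : A × B → ℝ) (X : A × B → α) :
    (ent p fun ω => (X ω, ω.2)) = ∑ b, ent (fun a => p (a, b)) fun a => X (a, b) := by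
  have hpr (a : A) (b : B) : pr p (fun ω => (X ω, ω.2)) (X (a, b), b) =
      pr (fun a => p (a, b)) (fun a => X (a, b)) (X (a, b)) := by
    simp only [pr, Finset.sum_filter, Fintype.sum_prod_type_right, Prod.mk.injEq, ite_and]
    rw [Finset.sum_eq_single b (fun b' _ hb => by simp [hb]) (by simp)]
    simp
  simp only [ent_eq_neg_sum, Fintype.sum_prod_type_right, hpr, Finset.sum_neg_distrib]

theorem cmi_prodMk_snd (p : A × B → ℝ) (X : A × B → α) (Y : A × B → β) (Z : A × B → γ) :
    cmi p X Y (fun ω => (Z ω, ω.2)) =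
      ∑ b, cmi (fun a => p (a, b)) (fun a => X (a, b)) (fun a => Y (a, b)) fun a => Z (a, b) := by
  have hXZ : (ent p fun ω => (X ω, Z ω, ω.2)) = ent p fun ω => ((X ω, Z ω), ω.2) :=
    ent_congr p fun a b => by simp only [Prod.mk.injEq, and_assoc]
  have hYZ : (ent p fun ω => (Y ω, Z ω, ω.2)) = ent p fun ω => ((Y ω, Z ω), ω.2) :=
    ent_congr p fun a b => by simp only [Prod.mk.injEq, and_assoc]
  have hXYZ : (ent p fun ω => (X ω, Y ω, Z ω, ω.2)) = ent p fun ω => ((X ω, Y ω, Z ω), ω.2) :=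
    ent_congr p fun a b => by simp only [Prod.mk.injEq, and_assoc]
  simp only [cmi, hXZ, hYZ, hXYZ, ent_prodMk_snd, Finset.sum_add_distrib, Finset.sum_sub_distrib]

end Slices

section IndependentMessages

variable {ι : Type*} {Q : ι → Type*}

theorem restrict_eq_restrict_iff {s : Finset ι} {w w' : ∀ i, Q i} :
    s.restrict w = s.restrict w' ↔ ∀ i ∈ s, w i = w' i := by
  simp [funext_iff]

variable [Fintype ι]

/-- The joint probability mass function of independent messages `W i` with mass functions `q i`. -/
def productMass (q : ∀ i, Q i → ℝ) (w : ∀ i, Q i) : ℝ :=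
  ∏ i, q i (w i)

variable {q : ∀ i, Q i → ℝ}

theorem productMass_nonneg (hq : ∀ i x, 0 ≤ q i x) (w : ∀ i, Q i) : 0 ≤ productMass q w :=
  Finset.prod_nonneg fun i _ => hq i (w i)

variable [DecidableEq ι] [∀ i, Fintype (Q i)]

theorem sum_productMass (hq_sum : ∀ i, ∑ x, q i x = 1) : ∑ w, productMass q w = 1 := by
  simp [productMass, ← Fintype.piFinset_univ, ← Finset.prod_univ_sum, hq_sum]

variable [∀ i, DecidableEq (Q i)]

theorem pr_restrict_productMass (hq_sum : ∀ i, ∑ x, q i x = 1) (s : Finset ι) (w : ∀ i, Q i) :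
    pr (productMass q) s.restrict (s.restrict w) = ∏ i ∈ s, q i (w i) := by
  have hfibre : Finset.univ.filter (fun w' : ∀ i, Q i => s.restrict w' = s.restrict w) =
      Fintype.piFinset fun i => if i ∈ s then {w i} else Finset.univ := by
    ext w'
    simp only [Finset.mem_filter_univ, restrict_eq_restrict_iff, Fintype.mem_piFinset]
    exact forall_congr' fun i => by split_ifs with hi <;> simp [hi]
  simp only [pr, hfibre, productMass, ← Finset.prod_univ_sum]
  rw [← Finset.prod_subset s.subset_univ fun i _ hi => by simp [hi, hq_sum]]
  exact Finset.prod_congr rfl fun i hi => by simp [hi]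

theorem ent_restrict_productMass (hq_sum : ∀ i, ∑ x, q i x = 1)
    (s : Finset ι) :
    ent (productMass q) s.restrict =
      ∑ i ∈ s, -∑ w, productMass q w * Real.logb 2 (q i (w i)) := by
  have hsplit (w : ∀ i, Q i) : productMass q w * Real.logb 2 (∏ i ∈ s, q i (w i)) =
      ∑ i ∈ s, productMass q w * Real.logb 2 (q i (w i)) := by
    obtain h0 | hw := eq_or_ne (productMass q w) 0
    · simp [h0]
    rw [Real.logb_prod _ _ fun i _ => Finset.prod_ne_zero_iff.1 hw i (Finset.mem_univ i),
      Finset.mul_sum]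
  simp only [ent_eq_neg_sum, pr_restrict_productMass hq_sum, hsplit, Finset.sum_neg_distrib]
  rw [Finset.sum_comm]

theorem cmi_eval_restrict_eq_zero (hq_sum : ∀ i, ∑ x, q i x = 1) {i : ι} {t : Finset ι}
    (hi : i ∉ t) (s : Finset ι) :
    cmi (productMass q) (fun w => w i) t.restrict s.restrict = 0 := by
  have hins : (ent (productMass q) fun w => (w i, s.restrict w)) =
      ent (productMass q) (insert i s).restrict :=
    ent_congr _ fun w w' => by simp [restrict_eq_restrict_iff]
  have hunion : (ent (productMass q) fun w => (t.restrict w, s.restrict w)) =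
      ent (productMass q) (t ∪ s).restrict :=
    ent_congr _ fun w w' => by
      simp only [Prod.mk.injEq, restrict_eq_restrict_iff, Finset.forall_mem_union]
  have hall : (ent (productMass q) fun w => (w i, t.restrict w, s.restrict w)) =
      ent (productMass q) (insert i (t ∪ s)).restrict :=
    ent_congr _ fun w w' => by
      simp only [Prod.mk.injEq, restrict_eq_restrict_iff, Finset.forall_mem_insert,
        Finset.forall_mem_union]
  rw [cmi, hins, hunion, hall]
  by_cases hs : i ∈ s
  · rw [Finset.insert_eq_of_mem hs, Finset.insert_eq_of_mem (Finset.mem_union_right t hs)]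
    ring
  · have hts : i ∉ t ∪ s := by simp [hi, hs]
    simp only [ent_restrict_productMass hq_sum, Finset.sum_insert hs, Finset.sum_insert hts]
    ring

theorem sum_cmi_eval_le (hq : ∀ i x, 0 ≤ q i x) (hq_sum : ∀ i, ∑ x, q i x = 1) {β : Type*}
    [DecidableEq β] (G : (∀ i, Q i) → β) (s t : Finset ι) :
    ∑ i ∈ t, cmi (productMass q) (fun w => w i) G s.restrict ≤
      cmi (productMass q) t.restrict G s.restrict := by
  induction t using Finset.induction_on with
  | empty => simpa using cmi_nonneg (productMass_nonneg hq) _ _ _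
  | insert i t hi ih =>
    rw [Finset.sum_insert hi]
    calc
      _ ≤ cmi (productMass q) (fun w => w i) G s.restrict +
          cmi (productMass q) t.restrict G s.restrict := by gcongr
      _ ≤ cmi (productMass q) (fun w => (w i, t.restrict w)) G s.restrict :=
        cmi_add_cmi_le_of_cmi_eq_zero (productMass_nonneg hq)
          (cmi_eval_restrict_eq_zero hq_sum hi s) G
      _ = cmi (productMass q) (insert i t).restrict G s.restrict :=
        cmi_congr _ (fun w w' => by simp [restrict_eq_restrict_iff]) (fun _ _ => Iff.rfl)
          fun _ _ => Iff.rfl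

end IndependentMessages

section Demands

variable {ι κ Q β : Type*}

theorem ite_some_none_eq_iff {α : κ → Type*} {P : κ → Prop} [DecidablePred P]
    {f g : ∀ j, α j} :
    ((fun j => if P j then some (f j) else none) = fun j => if P j then some (g j) else none) ↔
      ∀ j, P j → f j = g j := by
  rw [funext_iff]
  exact forall_congr' fun j => by split_ifs with hj <;> simp [hj]

variable [Fintype ι] [Fintype κ]

/-- Swapping `d k` with `n` is an involution on the pairs `(d, n)`. -/
theorem card_mul_sum_eval_eq_sum_sum [DecidableEq κ] (k : κ) (f : ι → (κ → ι) → ℝ)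
    (hf : ∀ n d m, f n (Function.update d k m) = f n d) :
    Fintype.card ι * ∑ d : κ → ι, f (d k) d = ∑ d, ∑ n, f n d := by
  have hinv : Function.Involutive fun x : (κ → ι) × ι => (Function.update x.1 k x.2, x.1 k) :=
    fun x => by simp
  calc
    _ = ∑ x : (κ → ι) × ι, f (x.1 k) x.1 := by
      simp [Fintype.sum_prod_type, Finset.mul_sum]
    _ = ∑ x : (κ → ι) × ι, f x.2 x.1 :=
      Fintype.sum_bijective _ hinv.bijective _ _ fun x => (hf _ _ _).symm
    _ = ∑ d, ∑ n, f n d := Fintype.sum_prod_type _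

variable [DecidableEq ι] [Fintype Q]

theorem one_div_card_eq_productMass_div_card [DecidableEq κ] :
    (fun _ : (ι → Q) × (κ → ι) => (1 : ℝ) / (Fintype.card ((ι → Q) × (κ → ι)) : ℝ)) =
      fun ω => productMass (fun _ _ => (Fintype.card Q : ℝ)⁻¹) ω.1 / Fintype.card (κ → ι) := by
  ext ω
  simp [productMass, div_eq_mul_inv, mul_comm]

variable [DecidableEq Q] [DecidableEq β]

theorem sum_cmi_eval_observed_le {q : ι → Q → ℝ} (hq : ∀ i x, 0 ≤ q i x)
    (hq_sum : ∀ i, ∑ x, q i x = 1) [Fintype β] (G : (ι → Q) → β) (d : κ → ι)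
    (P : κ → Prop) [DecidablePred P] :
    ∑ n, cmi (productMass q) (fun w => w n) G
        (fun w j => if P j then some (w (d j)) else none) ≤
      Real.logb 2 (Fintype.card β) := by
  let s := (Finset.univ.filter P).image d
  calc
    _ = ∑ n, cmi (productMass q) (fun w => w n) G s.restrict :=
      Finset.sum_congr rfl fun n _ =>
        cmi_congr _ (fun _ _ => Iff.rfl) (fun _ _ => Iff.rfl) fun w w' => by
          simp [s, ite_some_none_eq_iff, restrict_eq_restrict_iff]
    _ ≤ cmi (productMass q) Finset.univ.restrict G s.restrict :=
      sum_cmi_eval_le hq hq_sum G s Finset.univ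
    _ ≤ Real.logb 2 (Fintype.card β) := by
      simpa [sum_productMass hq_sum] using
        cmi_le_sum_mul_logb_card (productMass_nonneg hq) Finset.univ.restrict G s.restrict

theorem cmi_demanded_le [Nonempty ι] [DecidableEq κ] {q : ι → Q → ℝ} (hq : ∀ i x, 0 ≤ q i x)
    (hq_sum : ∀ i, ∑ x, q i x = 1) [Fintype β] (G : (ι → Q) → β) {k : κ} {P : κ → Prop}
    [DecidablePred P] (hk : ¬ P k) :
    cmi (fun ω : (ι → Q) × (κ → ι) => productMass q ω.1 / Fintype.card (κ → ι))
        (fun ω => ω.1 (ω.2 k)) (fun ω => G ω.1)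
        (fun ω => ((fun j => if P j then some (ω.1 (ω.2 j)) else none), ω.2)) ≤
      Real.logb 2 (Fintype.card β) / Fintype.card ι := by
  let info (n : ι) (d : κ → ι) : ℝ := cmi (productMass q) (fun w => w n) G
    fun w j => if P j then some (w (d j)) else none
  have hupdate (n d m) : info n (Function.update d k m) = info n d :=
    cmi_congr _ (fun _ _ => Iff.rfl) (fun _ _ => Iff.rfl) fun w w' => by
      simp only [ite_some_none_eq_iff]
      refine forall₂_congr fun j hj => ?_
      rw [Function.update_of_ne (by rintro rfl; exact hk hj)]
  have htotal : Fintype.card ι * ∑ d, info (d k) d ≤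
      Fintype.card (κ → ι) * Real.logb 2 (Fintype.card β) := by
    rw [card_mul_sum_eval_eq_sum_sum k info hupdate]
    simpa using Finset.sum_le_sum fun d (_ : d ∈ Finset.univ) =>
      sum_cmi_eval_observed_le hq hq_sum G d P
  have hι : (0 : ℝ) < Fintype.card ι := by exact_mod_cast Fintype.card_pos
  have hκι : (0 : ℝ) < Fintype.card (κ → ι) := by exact_mod_cast Fintype.card_pos
  rw [cmi_prodMk_snd]
  simp only [div_eq_inv_mul (productMass q _), cmi_const_mul, ← Finset.mul_sum]
  rw [inv_mul_le_iff₀ hκι, mul_div_assoc', le_div_iff₀' hι]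
  exact htotal

end Demands

theorem logb_card_pi_le {ι : Type*} {V : ι → Type*} [∀ i, Fintype (V i)] [∀ i, Nonempty (V i)]
    {r : ℝ} (s : Finset ι) [DecidableEq s] (hV : ∀ i ∈ s, (Fintype.card (V i) : ℝ) ≤ 2 ^ r) :
    Real.logb 2 (Fintype.card (∀ i : s, V i)) ≤ s.card * r := by
  rw [Fintype.card_pi, Nat.cast_prod, Real.logb_prod _ _ fun i _ => by simp]
  calc
    _ ≤ ∑ _i : s, r := Finset.sum_le_sum fun i _ =>
      (Real.logb_le_iff_le_rpow one_lt_two (by exact_mod_cast Fintype.card_pos)).2 (hV i i.2)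
    _ = s.card * r := by simp

theorem beta_bound_i_general {N K : ℕ} (hN : 0 < N) {F M : ℝ} (hF : 0 < F)
    {Q : Type*} [Fintype Q] [DecidableEq Q] {q : Fin N → Q → ℝ} (hq : ∀ i x, 0 ≤ q i x)
    (hq_sum : ∀ i, ∑ x, q i x = 1)
    {V : Fin K → Type*} [∀ i, Fintype (V i)] [∀ i, DecidableEq (V i)]
    (hV : ∀ i, Fintype.card (V i) ≤ ⌊(2 : ℝ) ^ (F * M)⌋₊)
    (g : ∀ i : Fin K, (Fin N → Q) → V i) (k : Fin K) :
    (1 / F) *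
        cmi (fun ω : (Fin N → Q) × (Fin K → Fin N) =>
              productMass q ω.1 / Fintype.card (Fin K → Fin N))
          (fun ω => ω.1 (ω.2 k))
          (fun ω => fun i : Fin K => if (i : ℕ) ≤ (k : ℕ) then some (g i ω.1) else none)
          (fun ω =>
            ((fun j : Fin K => if (j : ℕ) < (k : ℕ) then some (ω.1 (ω.2 j)) else none), ω.2))
      ≤ ((k : ℕ) + 1 : ℝ) * M / N := by
  have : NeZero N := ⟨hN.ne'⟩
  obtain ⟨x, -⟩ : ∃ x, q 0 x ≠ 0 := by
    simpa using Finset.exists_ne_zero_of_sum_ne_zero (ne_of_eq_of_ne (hq_sum 0) one_ne_zero)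
  have (i : Fin K) : Nonempty (V i) := ⟨g i fun _ => x⟩
  have hV' (i : Fin K) : (Fintype.card (V i) : ℝ) ≤ 2 ^ (F * M) :=
    (Nat.le_floor_iff (by positivity)).1 (hV i)
  rw [one_div, inv_mul_le_iff₀ hF]
  calc
    _ = cmi (fun ω : (Fin N → Q) × (Fin K → Fin N) =>
              productMass q ω.1 / Fintype.card (Fin K → Fin N))
          (fun ω => ω.1 (ω.2 k)) (fun ω => fun i : Finset.Iic k => g i ω.1)
          (fun ω =>
            ((fun j : Fin K => if (j : ℕ) < (k : ℕ) then some (ω.1 (ω.2 j)) else none), ω.2)) :=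
      cmi_congr _ (fun _ _ => Iff.rfl)
        (fun _ _ => ite_some_none_eq_iff.trans (by simp [funext_iff])) fun _ _ => Iff.rfl
    _ ≤ Real.logb 2 (Fintype.card (∀ i : Finset.Iic k, V i)) / N := by
      simpa only [Fintype.card_fin] using
        cmi_demanded_le hq hq_sum (fun w => fun i : Finset.Iic k => g i w)
          (P := fun j : Fin K => (j : ℕ) < k) (lt_irrefl (k : ℕ))
    _ ≤ (k + 1) * (F * M) / N := by
      gcongr
      simpa using logb_card_pi_le (Finset.Iic k) fun i _ => hV' i
    _ = F * ((k + 1) * M / N) := by ring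

/-- **Lemma 4, part (i).** The sample space is
`Ω = (Fin N → Fin (2^F)) × (Fin K → Fin N)` with the uniform distribution, so the
messages `W = ω.1` are i.i.d. uniform and the demand vector `D = ω.2` is uniform
on `{1,…,N}^K` and independent of the messages. With caches
`V_k = g_k(W_1,…,W_N)` of size at most `⌊2^{F·M}⌋`, for every `ℓ ∈ {1,…,K}` and
every `k ∈ {1,…,ℓ}` (below `k : Fin ℓ` is 0-based, so the receiver is `k+1`):
`β_k := (1/F)·I(W_{D_k}; V_1,…,V_k | W_{D_1},…,W_{D_{k−1}}, D) ≤ k·M/N`. -/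
theorem beta_bound_i
    (N K F : ℕ) (hN : 0 < N) (hK : 0 < K) (hF : 0 < F)
    (M : ℝ) (hM : 0 ≤ M)
    (V : Fin K → Type) [∀ k, Fintype (V k)] [∀ k, DecidableEq (V k)]
    (hV : ∀ k, Fintype.card (V k) ≤ ⌊(2 : ℝ) ^ ((F : ℝ) * M)⌋₊)
    (g : ∀ k : Fin K, (Fin N → Fin (2 ^ F)) → V k)
    (ℓ : ℕ) (hℓ1 : 1 ≤ ℓ) (hℓ2 : ℓ ≤ K)
    (k : Fin ℓ) :
    (1 / (F : ℝ)) *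
        cmi (fun _ : (Fin N → Fin (2 ^ F)) × (Fin K → Fin N) =>
              (1 : ℝ) / (Fintype.card ((Fin N → Fin (2 ^ F)) × (Fin K → Fin N)) : ℝ))
          (fun ω => ω.1 (ω.2 (Fin.castLE hℓ2 k)))
          (fun ω => fun i : Fin K =>
            if (i : ℕ) ≤ (k : ℕ) then some (g i ω.1) else none)
          (fun ω =>
            ((fun j : Fin K =>
                if (j : ℕ) < (k : ℕ) then some (ω.1 (ω.2 j)) else none), ω.2))
      ≤ ((k : ℕ) + 1 : ℝ) * M / (N : ℝ) := by
  rw [one_div_card_eq_productMass_div_card]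
  exact beta_bound_i_general hN (Nat.cast_pos.2 hF) (fun _ _ => by positivity) (fun _ => by simp)
    hV g (Fin.castLE hℓ2 k)
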